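/- Let Ω ⊆ ℝ³ be open and let u : Ω → ℝ be smooth with Δ_H u = 0 on Ω. Then the following Bochner-type identity holds pointwise on Ω: (1/2)·Δ_H(|∇_H u|²) = (X²u)² + (XYu)² + (YXu)² + (Y²u)² + 8·(Xu·Y(Tu) − Yu·X(Tu)). -/

import Mathlib

noncomputable section

open Complex

/-- The underlying space of the first Heisenberg group: ℝ³ with coordinates (x, y, t). -/
abbrev Heis : Type := ℝ × ℝ × ℝ

/-- The left-invariant vector field X = ∂/∂x + 2y ∂/∂t, as a derivation. -/
def XD {E : Type*} [NormedAddCommGroup E] [NormedSpace ℝ E] (u : Heis → E) (p : Heis) : E :=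
  fderiv ℝ u p (1, 0, 2 * p.2.1)

/-- The left-invariant vector field Y = ∂/∂y − 2x ∂/∂t, as a derivation. -/
def YD {E : Type*} [NormedAddCommGroup E] [NormedSpace ℝ E] (u : Heis → E) (p : Heis) : E :=
  fderiv ℝ u p (0, 1, -(2 * p.1))

/-- The vector field T = ∂/∂t, as a derivation. -/
def TD {E : Type*} [NormedAddCommGroup E] [NormedSpace ℝ E] (u : Heis → E) (p : Heis) : E :=
  fderiv ℝ u p (0, 0, 1)

/-- Z = (X − iY)/2. -/
def ZD (u : Heis → ℂ) (p : Heis) : ℂ := (XD u p - Complex.I * YD u p) / 2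

/-- Z̄ = (X + iY)/2. -/
def ZbD (u : Heis → ℂ) (p : Heis) : ℂ := (XD u p + Complex.I * YD u p) / 2

/-- The complexification F = f₁ + i f₂ of the horizontal components. -/
def CF (f1 f2 : Heis → ℝ) : Heis → ℂ := fun p => (f1 p : ℂ) + (f2 p : ℂ) * Complex.I

/-- Complexification of a real-valued function. -/
def Cplx (u : Heis → ℝ) : Heis → ℂ := fun p => (u p : ℂ)

/-- The horizontal Jacobian J_F = Xf₁·Yf₂ − Yf₁·Xf₂. -/
def JF (f1 f2 : Heis → ℝ) (p : Heis) : ℝ := XD f1 p * YD f2 p - YD f1 p * XD f2 p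

/-- The contact equations on Ω. -/
def ContactOn (f1 f2 f3 : Heis → ℝ) (Ω : Set Heis) : Prop :=
  ∀ p ∈ Ω, XD f3 p - 2 * f2 p * XD f1 p + 2 * f1 p * XD f2 p = 0 ∧
           YD f3 p - 2 * f2 p * YD f1 p + 2 * f1 p * YD f2 p = 0

/-- f = (f₁,f₂,f₃) is conformal on Ω: smooth, contact, J_F > 0, and the conformality
equations hold. -/
def ConformalOn (f1 f2 f3 : Heis → ℝ) (Ω : Set Heis) : Prop :=
  ContDiffOn ℝ (⊤ : ℕ∞) f1 Ω ∧ ContDiffOn ℝ (⊤ : ℕ∞) f2 Ω ∧ ContDiffOn ℝ (⊤ : ℕ∞) f3 Ω ∧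
  ContactOn f1 f2 f3 Ω ∧ (∀ p ∈ Ω, 0 < JF f1 f2 p) ∧
  ∀ p ∈ Ω, (XD f1 p) ^ 2 + (XD f2 p) ^ 2 = (YD f1 p) ^ 2 + (YD f2 p) ^ 2 ∧
           XD f1 p * YD f1 p + XD f2 p * YD f2 p = 0

/-- The sub-Laplacian Δ_H = X² + Y². -/
def LapH {E : Type*} [NormedAddCommGroup E] [NormedSpace ℝ E] (u : Heis → E) (p : Heis) : E :=
  XD (XD u) p + YD (YD u) p

/-- The CR Schwarzian derivative S_CR(f) = (1/2)·J_F·Z²(J_F⁻¹). -/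
def SCR (f1 f2 : Heis → ℝ) (p : Heis) : ℂ :=
  (1 / 2 : ℂ) * (JF f1 f2 p : ℂ) * ZD (ZD (fun q => (((JF f1 f2 q)⁻¹ : ℝ) : ℂ))) p

/-- The classical type Schwarzian S_CL(f) = Z³F/ZF − (3/2)(Z²F/ZF)². -/
def SCL (f1 f2 : Heis → ℝ) (p : Heis) : ℂ :=
  ZD (ZD (ZD (CF f1 f2))) p / ZD (CF f1 f2) p
    - (3 / 2 : ℂ) * (ZD (ZD (CF f1 f2)) p / ZD (CF f1 f2) p) ^ 2

/-- The Preschwarzian Pf = Z(ln J_F). -/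
def PS (f1 f2 : Heis → ℝ) (p : Heis) : ℂ := ZD (Cplx (fun q => Real.log (JF f1 f2 q))) p

/-- The map (f₁,f₂,f₃) packaged as a map Heis → Heis. -/
def Fmap (f1 f2 f3 : Heis → ℝ) (p : Heis) : Heis := (f1 p, f2 p, f3 p)

/-!
The Bochner formula is the Leibniz rule `Δ_H ‖v‖² = 2(‖Xv‖² + ‖Yv‖² + ⟪Δ_H v, v⟫)` applied to `v = Xu`
and to `v = Yu`. The terms `Δ_H X u` and `Δ_H Y u` are `X Δ_H u` and `Y Δ_H u` up to commutators; as
`[X, Y] = -4T` is central, `[Δ_H, X] = [Y², X] = 8 Y T` and `[Δ_H, Y] = [X², Y] = -8 X T`. When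
`Δ_H u = 0` only these commutators survive.
-/

open Topology VectorField
open scoped RealInnerProductSpace

section DerivAlong

variable {F E : Type*} [NormedAddCommGroup F] [NormedSpace ℝ F]
  [NormedAddCommGroup E] [NormedSpace ℝ E]
  {V W : F → F} {u v : F → E} {p : F}

/-- The derivative `V u` of a function `u` along a vector field `V` on a normed space. Both `V` and
`V u` are total functions, so derivatives along several fields are iterated by composition. -/
def derivAlong (V : F → F) (u : F → E) (p : F) : E :=
  fderiv ℝ u p (V p)

theorem contDiffAt_derivAlong {m n : WithTop ℕ∞} (hu : ContDiffAt ℝ n u p)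
    (hV : ContDiffAt ℝ m V p) (hmn : m + 1 ≤ n) : ContDiffAt ℝ m (derivAlong V u) p :=
  (hu.fderiv_right hmn).clm_apply hV

theorem derivAlong_congr (h : u =ᶠ[𝓝 p] v) : derivAlong V u p = derivAlong V v p := by
  rw [derivAlong, derivAlong, h.fderiv_eq]

theorem derivAlong_eq_zero (h : u =ᶠ[𝓝 p] 0) : derivAlong V u p = 0 := by
  simp [derivAlong, h.fderiv_eq]

theorem derivAlong_add (hu : DifferentiableAt ℝ u p) (hv : DifferentiableAt ℝ v p) :
    derivAlong V (fun q => u q + v q) p = derivAlong V u p + derivAlong V v p := by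
  simp [derivAlong, fderiv_fun_add hu hv]

theorem derivAlong_derivAlong_add (hu : ContDiffAt ℝ 2 u p) (hv : ContDiffAt ℝ 2 v p)
    (hV : ContDiffAt ℝ 1 V p) :
    derivAlong V (derivAlong V fun q => u q + v q) p
      = derivAlong V (derivAlong V u) p + derivAlong V (derivAlong V v) p := by
  have hVu : ContDiffAt ℝ 1 (derivAlong V u) p := contDiffAt_derivAlong hu hV (by norm_num)
  have hVv : ContDiffAt ℝ 1 (derivAlong V v) p := contDiffAt_derivAlong hv hV (by norm_num)
  have hV_add : (derivAlong V fun q => u q + v q) =ᶠ[𝓝 p]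
      fun q => derivAlong V u q + derivAlong V v q := by
    filter_upwards [hu.eventually (by simp), hv.eventually (by simp)] with q huq hvq
    exact derivAlong_add (huq.differentiableAt (by simp)) (hvq.differentiableAt (by simp))
  rw [derivAlong_congr hV_add,
    derivAlong_add (hVu.differentiableAt (by simp)) (hVv.differentiableAt (by simp))]

theorem derivAlong_const_smul_right (c : ℝ) : derivAlong V (c • u) p = c • derivAlong V u p := by
  simp [derivAlong, fderiv_const_smul_field]

theorem derivAlong_const_smul_left (c : ℝ) : derivAlong (c • V) u = c • derivAlong V u := by
  ext q
  simp [derivAlong]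

theorem derivAlong_lieBracket (hu : ContDiffAt ℝ 2 u p) (hV : DifferentiableAt ℝ V p)
    (hW : DifferentiableAt ℝ W p) :
    derivAlong (lieBracket ℝ V W) u p
      = derivAlong V (derivAlong W u) p - derivAlong W (derivAlong V u) p :=
  fderiv_apply_lieBracket hu (by simp) hW hV

/-- This is `[W², V] = W [W, V] + [W, V] W`, whose two summands agree by `hcomm`. -/
theorem derivAlong_derivAlong_derivAlong (hu : ContDiffAt ℝ 3 u p) (hV : ContDiffAt ℝ 2 V p)
    (hW : ContDiffAt ℝ 2 W p) (hcomm : lieBracket ℝ W (lieBracket ℝ W V) p = 0) :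
    derivAlong W (derivAlong W (derivAlong V u)) p
      = derivAlong V (derivAlong W (derivAlong W u)) p
        + (2 : ℝ) • derivAlong W (derivAlong (lieBracket ℝ W V) u) p := by
  have hB : ContDiffAt ℝ 1 (lieBracket ℝ W V) p := hW.lieBracket_vectorField hV (by norm_num)
  have hWu : ContDiffAt ℝ 2 (derivAlong W u) p := contDiffAt_derivAlong hu hW (by norm_num)
  have hVWu : ContDiffAt ℝ 1 (derivAlong V (derivAlong W u)) p :=
    contDiffAt_derivAlong hWu (hV.of_le (by norm_num)) (by norm_num)
  have hBu : ContDiffAt ℝ 1 (derivAlong (lieBracket ℝ W V) u) p :=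
    contDiffAt_derivAlong (hu.of_le (by norm_num)) hB le_rfl
  have hWVu : derivAlong W (derivAlong V u) =ᶠ[𝓝 p]
      fun q => derivAlong V (derivAlong W u) q + derivAlong (lieBracket ℝ W V) u q := by
    filter_upwards [hu.eventually (by simp), hV.eventually (by simp), hW.eventually (by simp)]
      with q huq hVq hWq
    rw [derivAlong_lieBracket (huq.of_le (by norm_num)) (hWq.differentiableAt (by simp))
      (hVq.differentiableAt (by simp)), add_sub_cancel]
  have hWVWu : derivAlong (lieBracket ℝ W V) (derivAlong W u) p
      = derivAlong W (derivAlong V (derivAlong W u)) p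
        - derivAlong V (derivAlong W (derivAlong W u)) p :=
    derivAlong_lieBracket hWu (hW.differentiableAt (by simp)) (hV.differentiableAt (by simp))
  have hBWu : derivAlong (lieBracket ℝ W V) (derivAlong W u) p
      = derivAlong W (derivAlong (lieBracket ℝ W V) u) p := by
    rw [eq_comm, ← sub_eq_zero, ← derivAlong_lieBracket (hu.of_le (by norm_num))
      (hW.differentiableAt (by simp)) (hB.differentiableAt (by simp)), derivAlong, hcomm, map_zero]
  calc derivAlong W (derivAlong W (derivAlong V u)) p
      = derivAlong W (derivAlong V (derivAlong W u)) p
          + derivAlong W (derivAlong (lieBracket ℝ W V) u) p := by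
        rw [derivAlong_congr hWVu, derivAlong_add (hVWu.differentiableAt (by simp))
          (hBu.differentiableAt (by simp))]
    _ = derivAlong V (derivAlong W (derivAlong W u)) p
          + (2 : ℝ) • derivAlong W (derivAlong (lieBracket ℝ W V) u) p := by
        rw [eq_add_of_sub_eq' hWVWu.symm, hBWu, two_smul, add_assoc]

end DerivAlong

section DerivAlongInner

variable {F E : Type*} [NormedAddCommGroup F] [NormedSpace ℝ F]
  [NormedAddCommGroup E] [InnerProductSpace ℝ E]
  {V : F → F} {u v : F → E} {p : F}

theorem derivAlong_inner (hu : DifferentiableAt ℝ u p) (hv : DifferentiableAt ℝ v p) :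
    derivAlong V (fun q => ⟪u q, v q⟫) p = ⟪u p, derivAlong V v p⟫ + ⟪derivAlong V u p, v p⟫ :=
  fderiv_inner_apply ℝ hu hv (V p)

theorem derivAlong_norm_sq (hu : DifferentiableAt ℝ u p) :
    derivAlong V (fun q => ‖u q‖ ^ 2) p = (2 : ℝ) • ⟪derivAlong V u p, u p⟫ := by
  simp only [← real_inner_self_eq_norm_sq]
  rw [derivAlong_inner hu hu, real_inner_comm, two_smul]

theorem derivAlong_derivAlong_norm_sq (hu : ContDiffAt ℝ 2 u p) (hV : ContDiffAt ℝ 1 V p) :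
    derivAlong V (derivAlong V fun q => ‖u q‖ ^ 2) p
      = 2 * (‖derivAlong V u p‖ ^ 2 + ⟪derivAlong V (derivAlong V u) p, u p⟫) := by
  have hVu : ContDiffAt ℝ 1 (derivAlong V u) p := contDiffAt_derivAlong hu hV (by norm_num)
  have hV_norm_sq : (derivAlong V fun q => ‖u q‖ ^ 2) =ᶠ[𝓝 p]
      (2 : ℝ) • fun q => ⟪derivAlong V u q, u q⟫ := by
    filter_upwards [hu.eventually (by simp)] with q huq
    exact derivAlong_norm_sq (huq.differentiableAt (by simp))
  rw [derivAlong_congr hV_norm_sq, derivAlong_const_smul_right,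
    derivAlong_inner (hVu.differentiableAt (by simp)) (hu.differentiableAt (by simp)),
    real_inner_self_eq_norm_sq, smul_eq_mul]

end DerivAlongInner

section HeisenbergFields

/-- The vector field `X = ∂/∂x + 2y ∂/∂t`; `XD` is by definition the derivative along it. -/
def fieldX (p : Heis) : Heis := (1, 0, 2 * p.2.1)

/-- The vector field `Y = ∂/∂y − 2x ∂/∂t`; `YD` is by definition the derivative along it. -/
def fieldY (p : Heis) : Heis := (0, 1, -(2 * p.1))

/-- The vector field `T = ∂/∂t`; `TD` is by definition the derivative along it. -/
def fieldT (_ : Heis) : Heis := (0, 0, 1)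

theorem contDiff_fieldX {n : WithTop ℕ∞} : ContDiff ℝ n fieldX := by
  unfold fieldX
  fun_prop

theorem contDiff_fieldY {n : WithTop ℕ∞} : ContDiff ℝ n fieldY := by
  unfold fieldY
  fun_prop

theorem differentiable_fieldT : Differentiable ℝ fieldT :=
  differentiable_const _

theorem fderiv_fieldX (p v : Heis) : fderiv ℝ fieldX p v = (0, 0, 2 * v.2.1) := by
  have hy : HasFDerivAt (fun q : Heis => 2 * q.2.1) _ p :=
    (hasFDerivAt_snd (𝕜 := ℝ)).fst.const_mul 2
  have h : HasFDerivAt fieldX _ p :=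
    (hasFDerivAt_const 1 p).prodMk ((hasFDerivAt_const 0 p).prodMk hy)
  simp [h.fderiv]

theorem fderiv_fieldY (p v : Heis) : fderiv ℝ fieldY p v = (0, 0, -(2 * v.1)) := by
  have hx : HasFDerivAt (fun q : Heis => -(2 * q.1)) _ p :=
    ((hasFDerivAt_fst (𝕜 := ℝ)).const_mul 2).fun_neg
  have h : HasFDerivAt fieldY _ p :=
    (hasFDerivAt_const 0 p).prodMk ((hasFDerivAt_const 1 p).prodMk hx)
  simp [h.fderiv]

theorem fderiv_fieldT (p v : Heis) : fderiv ℝ fieldT p v = 0 := by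
  simp [show fieldT = fun _ => (0, 0, 1) from rfl]

theorem lieBracket_fieldX_fieldY : lieBracket ℝ fieldX fieldY = (-4 : ℝ) • fieldT := by
  ext p <;> norm_num [lieBracket, fderiv_fieldX, fderiv_fieldY, fieldX, fieldY, fieldT]

theorem lieBracket_fieldY_fieldX : lieBracket ℝ fieldY fieldX = (4 : ℝ) • fieldT := by
  ext1 p
  rw [lieBracket_swap, lieBracket_fieldX_fieldY]
  simp

theorem lieBracket_fieldX_fieldT : lieBracket ℝ fieldX fieldT = 0 := by
  ext1 p
  simp [lieBracket, fderiv_fieldX, fderiv_fieldT, fieldT]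

theorem lieBracket_fieldY_fieldT : lieBracket ℝ fieldY fieldT = 0 := by
  ext1 p
  simp [lieBracket, fderiv_fieldY, fderiv_fieldT, fieldT]

end HeisenbergFields

section SubLaplacian

variable {E : Type*} [NormedAddCommGroup E] [NormedSpace ℝ E] {u v : Heis → E} {p : Heis}

theorem contDiffAt_XD {m n : WithTop ℕ∞} (hu : ContDiffAt ℝ n u p) (hmn : m + 1 ≤ n) :
    ContDiffAt ℝ m (XD u) p :=
  contDiffAt_derivAlong hu contDiff_fieldX.contDiffAt hmn

theorem contDiffAt_YD {m n : WithTop ℕ∞} (hu : ContDiffAt ℝ n u p) (hmn : m + 1 ≤ n) :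
    ContDiffAt ℝ m (YD u) p :=
  contDiffAt_derivAlong hu contDiff_fieldY.contDiffAt hmn

theorem YD_YD_XD (hu : ContDiffAt ℝ 3 u p) :
    YD (YD (XD u)) p = XD (YD (YD u)) p + (8 : ℝ) • YD (TD u) p := by
  have hcomm : lieBracket ℝ fieldY (lieBracket ℝ fieldY fieldX) p = 0 := by
    rw [lieBracket_fieldY_fieldX, lieBracket_const_smul_right (differentiable_fieldT p),
      lieBracket_fieldY_fieldT, Pi.zero_apply, smul_zero]
  calc YD (YD (XD u)) p
      = XD (YD (YD u)) p
          + (2 : ℝ) • derivAlong fieldY (derivAlong (lieBracket ℝ fieldY fieldX) u) p :=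
        derivAlong_derivAlong_derivAlong hu contDiff_fieldX.contDiffAt
          contDiff_fieldY.contDiffAt hcomm
    _ = XD (YD (YD u)) p + (2 * 4 : ℝ) • YD (TD u) p := by
        rw [lieBracket_fieldY_fieldX, derivAlong_const_smul_left, derivAlong_const_smul_right,
          smul_smul]
        rfl
    _ = XD (YD (YD u)) p + (8 : ℝ) • YD (TD u) p := by norm_num

theorem XD_XD_YD (hu : ContDiffAt ℝ 3 u p) :
    XD (XD (YD u)) p = YD (XD (XD u)) p - (8 : ℝ) • XD (TD u) p := by
  have hcomm : lieBracket ℝ fieldX (lieBracket ℝ fieldX fieldY) p = 0 := by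
    rw [lieBracket_fieldX_fieldY, lieBracket_const_smul_right (differentiable_fieldT p),
      lieBracket_fieldX_fieldT, Pi.zero_apply, smul_zero]
  calc XD (XD (YD u)) p
      = YD (XD (XD u)) p
          + (2 : ℝ) • derivAlong fieldX (derivAlong (lieBracket ℝ fieldX fieldY) u) p :=
        derivAlong_derivAlong_derivAlong hu contDiff_fieldY.contDiffAt
          contDiff_fieldX.contDiffAt hcomm
    _ = YD (XD (XD u)) p + (2 * -4 : ℝ) • XD (TD u) p := by
        rw [lieBracket_fieldX_fieldY, derivAlong_const_smul_left, derivAlong_const_smul_right,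
          smul_smul]
        rfl
    _ = YD (XD (XD u)) p - (8 : ℝ) • XD (TD u) p := by norm_num [sub_eq_add_neg]

theorem derivAlong_LapH {V : Heis → Heis} (hu : ContDiffAt ℝ 3 u p) :
    derivAlong V (LapH u) p = derivAlong V (XD (XD u)) p + derivAlong V (YD (YD u)) p := by
  have hXX : ContDiffAt ℝ 1 (XD (XD u)) p :=
    contDiffAt_XD (contDiffAt_XD (m := 2) hu (by norm_num)) (by norm_num)
  have hYY : ContDiffAt ℝ 1 (YD (YD u)) p :=
    contDiffAt_YD (contDiffAt_YD (m := 2) hu (by norm_num)) (by norm_num)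
  exact derivAlong_add (hXX.differentiableAt one_ne_zero) (hYY.differentiableAt one_ne_zero)

theorem LapH_XD (hu : ContDiffAt ℝ 3 u p) :
    LapH (XD u) p = XD (LapH u) p + (8 : ℝ) • YD (TD u) p := by
  have hXL : XD (LapH u) p = XD (XD (XD u)) p + XD (YD (YD u)) p :=
    derivAlong_LapH (V := fieldX) hu
  rw [LapH, YD_YD_XD hu, hXL, add_assoc]

theorem LapH_YD (hu : ContDiffAt ℝ 3 u p) :
    LapH (YD u) p = YD (LapH u) p - (8 : ℝ) • XD (TD u) p := by
  have hYL : YD (LapH u) p = YD (XD (XD u)) p + YD (YD (YD u)) p :=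
    derivAlong_LapH (V := fieldY) hu
  rw [LapH, XD_XD_YD hu, hYL, sub_add_eq_add_sub]

theorem LapH_add (hu : ContDiffAt ℝ 2 u p) (hv : ContDiffAt ℝ 2 v p) :
    LapH (fun q => u q + v q) p = LapH u p + LapH v p := by
  have hX : XD (XD fun q => u q + v q) p = XD (XD u) p + XD (XD v) p :=
    derivAlong_derivAlong_add hu hv contDiff_fieldX.contDiffAt
  have hY : YD (YD fun q => u q + v q) p = YD (YD u) p + YD (YD v) p :=
    derivAlong_derivAlong_add hu hv contDiff_fieldY.contDiffAt
  rw [LapH, LapH, LapH, hX, hY, add_add_add_comm]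

end SubLaplacian

section Bochner

variable {E : Type*} [NormedAddCommGroup E] [InnerProductSpace ℝ E] {u : Heis → E} {p : Heis}

theorem LapH_norm_sq (hu : ContDiffAt ℝ 2 u p) :
    LapH (fun q => ‖u q‖ ^ 2) p = 2 * (‖XD u p‖ ^ 2 + ‖YD u p‖ ^ 2 + ⟪LapH u p, u p⟫) := by
  have hX : XD (XD fun q => ‖u q‖ ^ 2) p = 2 * (‖XD u p‖ ^ 2 + ⟪XD (XD u) p, u p⟫) :=
    derivAlong_derivAlong_norm_sq hu contDiff_fieldX.contDiffAt
  have hY : YD (YD fun q => ‖u q‖ ^ 2) p = 2 * (‖YD u p‖ ^ 2 + ⟪YD (YD u) p, u p⟫) :=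
    derivAlong_derivAlong_norm_sq hu contDiff_fieldY.contDiffAt
  rw [LapH, LapH, hX, hY, inner_add_left]
  ring

theorem stmt_18_general (hu : ContDiffAt ℝ 3 u p) :
    (1 / 2) * LapH (fun q => ‖XD u q‖ ^ 2 + ‖YD u q‖ ^ 2) p
      = ‖XD (XD u) p‖ ^ 2 + ‖XD (YD u) p‖ ^ 2 + ‖YD (XD u) p‖ ^ 2 + ‖YD (YD u) p‖ ^ 2
        + 8 * (⟪YD (TD u) p, XD u p⟫ - ⟪XD (TD u) p, YD u p⟫)
        + (⟪XD (LapH u) p, XD u p⟫ + ⟪YD (LapH u) p, YD u p⟫) := by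
  have hX : ContDiffAt ℝ 2 (XD u) p := contDiffAt_XD hu (by norm_num)
  have hY : ContDiffAt ℝ 2 (YD u) p := contDiffAt_YD hu (by norm_num)
  rw [LapH_add (hX.norm_sq ℝ) (hY.norm_sq ℝ), LapH_norm_sq hX, LapH_norm_sq hY, LapH_XD hu,
    LapH_YD hu, inner_add_left, inner_sub_left, real_inner_smul_left, real_inner_smul_left]
  ring

end Bochner

/-- the Bochner-type identity for sub-Laplacian harmonic functions:
(1/2)Δ_H(|∇_H u|²) = (X²u)² + (XYu)² + (YXu)² + (Y²u)² + 8(Xu·Y(Tu) − Yu·X(Tu)). -/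
theorem stmt_18 (Ω : Set Heis) (hΩ : IsOpen Ω) (u : Heis → ℝ)
    (hu : ContDiffOn ℝ (⊤ : ℕ∞) u Ω) (hharm : ∀ p ∈ Ω, LapH u p = 0) :
    ∀ p ∈ Ω,
      (1 / 2) * LapH (fun q => (XD u q) ^ 2 + (YD u q) ^ 2) p
        = (XD (XD u) p) ^ 2 + (XD (YD u) p) ^ 2 + (YD (XD u) p) ^ 2 + (YD (YD u) p) ^ 2
          + 8 * (XD u p * YD (TD u) p - YD u p * XD (TD u) p) := by
  intro p hp
  have hΩp : Ω ∈ 𝓝 p := hΩ.mem_nhds hp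
  have hL : LapH u =ᶠ[𝓝 p] 0 := Filter.mem_of_superset hΩp hharm
  have hXL : XD (LapH u) p = 0 := derivAlong_eq_zero (V := fieldX) hL
  have hYL : YD (LapH u) p = 0 := derivAlong_eq_zero (V := fieldY) hL
  simpa [hXL, hYL] using stmt_18_general (contDiffAt_infty.1 (hu.contDiffAt hΩp) 3)
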